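/- Let h : ℝⁿ → ℝ be bounded, continuous and locally Lipschitz. Suppose that for each t > 0 there is a sequence of bounded continuous locally Lipschitz functions u_k^t : ℝⁿ → ℝ (k ∈ ℕ) such that sup_{x∈Ω} |(T_t h)(x) − u_k^t(x)| → 0 as k → ∞ for every bounded subset Ω ⊆ ℝⁿ. Then u_k^t converges uniformly on bounded sets to U_h as t, k → ∞: for every bounded Ω ⊆ ℝⁿ and every ε > 0 there exists T₀ > 0 such that for each t ≥ T₀ there exists K₀ with sup_{x∈Ω} |u_k^t(x) − U_h(x)| < ε for all k ≥ K₀. -/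

import Mathlib

/-!
The function `U_h` is fixed by every `T_t`, because `V(x) = v_t(x) + V(φ(t,x))`. Hence
`T_t h - U_h = T_t (h - U_h)`, where `h - U_h` is bounded and tends to zero at the equilibrium,
since integrating the exponential decay gives `V(x) → 0` there. For such a function `g`,
`T_t g → 0` uniformly on the whole space: fix a small neighbourhood of the equilibrium. If the
orbit of `x` meets it before time `t`, stability keeps `φ(t,x)` in the region where `g` is small;
otherwise `η` is at least some `m > 0` along the orbit and the weight is at most `exp (-m t)`.
-/

open Filter Topology MeasureTheory Bornology
open scoped ENNReal

noncomputable section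

/-- `V(x) = ∫₀^∞ η(φ(t,x)) dt`, with value `∞` if the integral diverges. -/
def zubovV {n : ℕ} (φ : ℝ → EuclideanSpace ℝ (Fin n) → EuclideanSpace ℝ (Fin n))
    (η : EuclideanSpace ℝ (Fin n) → ℝ) (x : EuclideanSpace ℝ (Fin n)) : ℝ≥0∞ :=
  ∫⁻ t in Set.Ioi (0:ℝ), ENNReal.ofReal (η (φ t x))

/-- `U_h(x) = exp(−V(x))·h(x_eq)` when `V(x) < ∞`, and `U_h(x) = 0` otherwise. -/
def zubovU {n : ℕ} (φ : ℝ → EuclideanSpace ℝ (Fin n) → EuclideanSpace ℝ (Fin n))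
    (η : EuclideanSpace ℝ (Fin n) → ℝ) (xeq : EuclideanSpace ℝ (Fin n))
    (h : EuclideanSpace ℝ (Fin n) → ℝ) (x : EuclideanSpace ℝ (Fin n)) : ℝ :=
  if zubovV φ η x < ⊤ then Real.exp (-(zubovV φ η x).toReal) * h xeq else 0

/-- The Zubov–Koopman operator `(T_t h)(x) = exp(−∫₀ᵗ η(φ(r,x)) dr) · h(φ(t,x))`. -/
def zubovKoopman {n : ℕ} (φ : ℝ → EuclideanSpace ℝ (Fin n) → EuclideanSpace ℝ (Fin n))
    (η : EuclideanSpace ℝ (Fin n) → ℝ) (t : ℝ) (h : EuclideanSpace ℝ (Fin n) → ℝ)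
    (x : EuclideanSpace ℝ (Fin n)) : ℝ :=
  Real.exp (-(∫ r in (0:ℝ)..t, η (φ r x))) * h (φ t x)

section ExpNeg

/-- The function `v ↦ exp (-v)` on `[0, ∞]`, with the value `0` at `∞`. It absorbs the case
distinction in the definition of `U_h`. -/
def expNeg (v : ℝ≥0∞) : ℝ :=
  if v < ⊤ then Real.exp (-v.toReal) else 0

theorem expNeg_of_ne_top {v : ℝ≥0∞} (hv : v ≠ ⊤) : expNeg v = Real.exp (-v.toReal) :=
  if_pos hv.lt_top

@[simp]
theorem expNeg_top : expNeg ⊤ = 0 :=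
  if_neg (lt_irrefl _)

theorem expNeg_ofReal {v : ℝ} (hv : 0 ≤ v) : expNeg (ENNReal.ofReal v) = Real.exp (-v) := by
  rw [expNeg_of_ne_top ENNReal.ofReal_ne_top, ENNReal.toReal_ofReal hv]

theorem expNeg_nonneg (v : ℝ≥0∞) : 0 ≤ expNeg v := by
  unfold expNeg
  split_ifs <;> positivity

theorem expNeg_le_one (v : ℝ≥0∞) : expNeg v ≤ 1 := by
  unfold expNeg
  split_ifs
  · exact Real.exp_le_one_iff.2 (neg_nonpos.2 ENNReal.toReal_nonneg)
  · exact zero_le_one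

theorem expNeg_add (v w : ℝ≥0∞) : expNeg (v + w) = expNeg v * expNeg w := by
  rcases eq_or_ne v ⊤ with rfl | hv
  · simp
  rcases eq_or_ne w ⊤ with rfl | hw
  · simp
  rw [expNeg_of_ne_top hv, expNeg_of_ne_top hw, expNeg_of_ne_top (ENNReal.add_ne_top.2 ⟨hv, hw⟩),
    ENNReal.toReal_add hv hw, neg_add, Real.exp_add]

theorem tendsto_expNeg_zero : Tendsto expNeg (𝓝 0) (𝓝 1) := by
  have hexp : Tendsto (fun v : ℝ≥0∞ => Real.exp (-v.toReal)) (𝓝 0) (𝓝 1) := by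
    simpa using (ENNReal.tendsto_toReal ENNReal.zero_ne_top).neg.rexp
  refine hexp.congr' ?_
  filter_upwards [eventually_lt_nhds ENNReal.zero_lt_top] with v hv
  exact (expNeg_of_ne_top hv.ne).symm

end ExpNeg

section Koopman

variable {X : Type*} {φ : ℝ → X → X} {η g h : X → ℝ} {x x₀ : X} {t : ℝ}

/-- The integral of the running cost `η` along the whole forward orbit of `x`: the function `V`,
for a family of self-maps of an arbitrary type. -/
def totalCost (φ : ℝ → X → X) (η : X → ℝ) (x : X) : ℝ≥0∞ :=
  ∫⁻ t in Set.Ioi (0 : ℝ), ENNReal.ofReal (η (φ t x))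

/-- The Zubov–Koopman operator `T_t`, for a family of self-maps of an arbitrary type. -/
def weightedKoopman (φ : ℝ → X → X) (η : X → ℝ) (t : ℝ) (g : X → ℝ) (x : X) : ℝ :=
  Real.exp (-(∫ r in (0 : ℝ)..t, η (φ r x))) * g (φ t x)

/-- The limit function `U_h`, for a family of self-maps of an arbitrary type. -/
def koopmanLimit (φ : ℝ → X → X) (η : X → ℝ) (x₀ : X) (h : X → ℝ) (x : X) : ℝ :=
  expNeg (totalCost φ η x) * h x₀

theorem abs_koopmanLimit_le (φ : ℝ → X → X) (η : X → ℝ) (x₀ : X) (h : X → ℝ) (x : X) :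
    |koopmanLimit φ η x₀ h x| ≤ |h x₀| := by
  rw [koopmanLimit, abs_mul, abs_of_nonneg (expNeg_nonneg _)]
  exact mul_le_of_le_one_left (abs_nonneg _) (expNeg_le_one _)

theorem weightedKoopman_sub (φ : ℝ → X → X) (η : X → ℝ) (t : ℝ) (g h : X → ℝ) :
    weightedKoopman φ η t (g - h) = weightedKoopman φ η t g - weightedKoopman φ η t h :=
  funext fun _ => mul_sub _ _ _

theorem setLIntegral_Ioi_comp_const_add (F : ℝ → ℝ≥0∞) (t : ℝ) :
    ∫⁻ s in Set.Ioi 0, F (t + s) = ∫⁻ r in Set.Ioi t, F r := by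
  simpa using (measurePreserving_add_left volume t).setLIntegral_comp_preimage_emb
    (measurableEmbedding_addLeft t) F (Set.Ioi t)

theorem totalCost_eq_integral_add (hηnn : ∀ y, 0 ≤ η y)
    (hφadd : ∀ x, ∀ s ≥ 0, ∀ t ≥ 0, φ s (φ t x) = φ (t + s) x)
    (hηφ : ContinuousOn (fun s => η (φ s x)) (Set.Ici 0)) (ht : 0 ≤ t) :
    totalCost φ η x =
      ENNReal.ofReal (∫ r in (0 : ℝ)..t, η (φ r x)) + totalCost φ η (φ t x) := by
  have hint : IntegrableOn (fun r => η (φ r x)) (Set.Ioc 0 t) :=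
    (hηφ.mono Set.Icc_subset_Ici_self).integrableOn_Icc.mono_set Set.Ioc_subset_Icc_self
  have htail : totalCost φ η (φ t x) = ∫⁻ r in Set.Ioi t, ENNReal.ofReal (η (φ r x)) := by
    rw [← setLIntegral_Ioi_comp_const_add]
    refine setLIntegral_congr_fun measurableSet_Ioi fun s hs => ?_
    simp only [hφadd x s (le_of_lt hs) t ht]
  rw [htail, intervalIntegral.integral_of_le ht,
    ofReal_integral_eq_lintegral_ofReal hint (Eventually.of_forall fun _ => hηnn _),
    ← lintegral_union measurableSet_Ioi (Set.Ioc_disjoint_Ioi le_rfl),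
    Set.Ioc_union_Ioi_eq_Ioi ht, totalCost]

theorem weightedKoopman_koopmanLimit (hηnn : ∀ y, 0 ≤ η y)
    (hφadd : ∀ x, ∀ s ≥ 0, ∀ t ≥ 0, φ s (φ t x) = φ (t + s) x)
    (hηφ : ∀ x, ContinuousOn (fun s => η (φ s x)) (Set.Ici 0)) (ht : 0 ≤ t) :
    weightedKoopman φ η t (koopmanLimit φ η x₀ h) = koopmanLimit φ η x₀ h := by
  funext x
  have hv : 0 ≤ ∫ r in (0 : ℝ)..t, η (φ r x) :=
    intervalIntegral.integral_nonneg ht fun _ _ => hηnn _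
  simp only [weightedKoopman, koopmanLimit]
  rw [totalCost_eq_integral_add hηnn hφadd (hηφ x) ht, expNeg_add, expNeg_ofReal hv, mul_assoc]

theorem abs_weightedKoopman_le {m : ℝ} (hηφ : ContinuousOn (fun s => η (φ s x)) (Set.Ici 0))
    (ht : 0 ≤ t) (hm : ∀ s ∈ Set.Icc 0 t, m ≤ η (φ s x)) :
    |weightedKoopman φ η t g x| ≤ Real.exp (-(m * t)) * |g (φ t x)| := by
  have hmt : m * t ≤ ∫ r in (0 : ℝ)..t, η (φ r x) := by
    calc m * t = ∫ _ in (0 : ℝ)..t, m := by simp [mul_comm]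
      _ ≤ ∫ r in (0 : ℝ)..t, η (φ r x) :=
        intervalIntegral.integral_mono_on ht intervalIntegrable_const
          ((hηφ.mono Set.Icc_subset_Ici_self).intervalIntegrable_of_Icc ht) hm
  rw [weightedKoopman, abs_mul, Real.abs_exp]
  gcongr

variable [TopologicalSpace X]

/-- Lyapunov stability of `x₀` in forward time: orbits starting close to `x₀` stay close to it. -/
def IsLyapunovStable (φ : ℝ → X → X) (x₀ : X) : Prop :=
  ∀ U ∈ 𝓝 x₀, ∀ᶠ x in 𝓝 x₀, ∀ t ≥ 0, φ t x ∈ U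

theorem tendsto_koopmanLimit (hV : Tendsto (totalCost φ η) (𝓝 x₀) (𝓝 0)) :
    Tendsto (koopmanLimit φ η x₀ h) (𝓝 x₀) (𝓝 (h x₀)) := by
  rw [← one_mul (h x₀)]
  exact (tendsto_expNeg_zero.comp hV).mul_const (h x₀)

theorem tendstoUniformly_weightedKoopman_zero (hηnn : ∀ y, 0 ≤ η y)
    (hφadd : ∀ x, ∀ s ≥ 0, ∀ t ≥ 0, φ s (φ t x) = φ (t + s) x)
    (hηφ : ∀ x, ContinuousOn (fun s => η (φ s x)) (Set.Ici 0))
    (hstab : IsLyapunovStable φ x₀) (hηinf : ∀ U ∈ 𝓝 x₀, ∃ m > 0, ∀ y ∉ U, m ≤ η y)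
    {C : ℝ} (hgC : ∀ x, |g x| ≤ C) (hg : Tendsto g (𝓝 x₀) (𝓝 0)) :
    TendstoUniformly (weightedKoopman φ η · g) 0 atTop := by
  refine Metric.tendstoUniformly_iff.2 fun ε hε => ?_
  have hsmall : ∀ᶠ y in 𝓝 x₀, |g y| < ε := by simpa using hg.abs.eventually_lt_const (by simpa)
  obtain ⟨m, hm, hηm⟩ := hηinf _ (hstab _ hsmall)
  have hdecay : Tendsto (fun t => Real.exp (-(m * t)) * C) atTop (𝓝 0) := by
    simpa using (Real.tendsto_exp_neg_atTop_nhds_zero.comp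
      (tendsto_id.const_mul_atTop hm)).mul_const C
  filter_upwards [eventually_ge_atTop 0, hdecay.eventually_lt_const hε] with t ht hCt x
  rw [Pi.zero_apply, dist_zero_left, Real.norm_eq_abs]
  by_cases henter : ∃ s ∈ Set.Icc 0 t, ∀ r ≥ 0, |g (φ r (φ s x))| < ε
  · obtain ⟨s, ⟨hs, hst⟩, hr⟩ := henter
    have hgt : |g (φ t x)| < ε := by
      simpa [hφadd x (t - s) (sub_nonneg.2 hst) s hs] using hr (t - s) (sub_nonneg.2 hst)
    calc |weightedKoopman φ η t g x| ≤ Real.exp (-(0 * t)) * |g (φ t x)| :=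
          abs_weightedKoopman_le (hηφ x) ht fun _ _ => hηnn _
      _ < ε := by simpa using hgt
  · push Not at henter
    have hηorbit : ∀ s ∈ Set.Icc 0 t, m ≤ η (φ s x) := fun s hs => hηm _ fun hmem => by
      obtain ⟨r, hr, hεr⟩ := henter s hs
      exact hεr.not_gt (hmem r hr)
    calc |weightedKoopman φ η t g x| ≤ Real.exp (-(m * t)) * |g (φ t x)| :=
          abs_weightedKoopman_le (hηφ x) ht hηorbit
      _ ≤ Real.exp (-(m * t)) * C := by gcongr; exact hgC _
      _ < ε := hCt

theorem tendstoUniformly_weightedKoopman (hηnn : ∀ y, 0 ≤ η y)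
    (hφadd : ∀ x, ∀ s ≥ 0, ∀ t ≥ 0, φ s (φ t x) = φ (t + s) x)
    (hηφ : ∀ x, ContinuousOn (fun s => η (φ s x)) (Set.Ici 0))
    (hstab : IsLyapunovStable φ x₀) (hηinf : ∀ U ∈ 𝓝 x₀, ∃ m > 0, ∀ y ∉ U, m ≤ η y)
    (hV : Tendsto (totalCost φ η) (𝓝 x₀) (𝓝 0))
    {C : ℝ} (hhC : ∀ x, |h x| ≤ C) (hh : ContinuousAt h x₀) :
    TendstoUniformly (weightedKoopman φ η · h) (koopmanLimit φ η x₀ h) atTop := by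
  set U := koopmanLimit φ η x₀ h
  have hbound : ∀ x, |(h - U) x| ≤ C + C := fun x =>
    (abs_sub _ _).trans (add_le_add (hhC x) ((abs_koopmanLimit_le ..).trans (hhC x₀)))
  have hlim : Tendsto (h - U) (𝓝 x₀) (𝓝 0) := by
    rw [← sub_self (h x₀)]
    exact hh.tendsto.sub (tendsto_koopmanLimit hV)
  have hzero := tendstoUniformly_weightedKoopman_zero hηnn hφadd hηφ hstab hηinf hbound hlim
  rw [Metric.tendstoUniformly_iff] at hzero ⊢
  intro ε hε
  filter_upwards [eventually_ge_atTop 0, hzero ε hε] with t ht hlt x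
  have hinv : weightedKoopman φ η t U = U := weightedKoopman_koopmanLimit hηnn hφadd hηφ ht
  simpa [weightedKoopman_sub, hinv, dist_eq_norm, norm_sub_rev] using hlt x

end Koopman

section ExponentialStability

theorem lintegral_ofReal_mul_exp_neg_Ioi_zero {A c : ℝ} (hA : 0 ≤ A) (hc : 0 < c) :
    ∫⁻ t in Set.Ioi (0 : ℝ), ENNReal.ofReal (A * Real.exp (-c * t)) = ENNReal.ofReal (A / c) := by
  have hint : IntegrableOn (fun t => A * Real.exp (-c * t)) (Set.Ioi 0) :=
    (integrableOn_exp_mul_Ioi (neg_neg_of_pos hc) 0).const_mul A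
  rw [← ofReal_integral_eq_lintegral_ofReal hint (Eventually.of_forall fun _ => by positivity),
    integral_const_mul, integral_exp_mul_Ioi (neg_neg_of_pos hc)]
  simp [div_eq_mul_inv]

variable {X : Type*} [PseudoMetricSpace X] {φ : ℝ → X → X} {η : X → ℝ} {x₀ : X}

/-- Local exponential stability of `x₀` in forward time. -/
def IsLocallyExpStable (φ : ℝ → X → X) (x₀ : X) : Prop :=
  ∃ δ > 0, ∃ M > 0, ∃ c > 0, ∀ x, dist x x₀ ≤ δ →
    ∀ t ≥ 0, dist (φ t x) x₀ ≤ M * dist x x₀ * Real.exp (-c * t)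

theorem tendsto_const_mul_dist (x₀ : X) (a : ℝ) :
    Tendsto (fun x => a * dist x x₀) (𝓝 x₀) (𝓝 0) := by
  simpa using ((continuous_id.dist (continuous_const (y := x₀))).const_mul a).tendsto x₀

theorem IsLocallyExpStable.isLyapunovStable (hstab : IsLocallyExpStable φ x₀) :
    IsLyapunovStable φ x₀ := by
  obtain ⟨δ, hδ, M, hM, c, hc, hdecay⟩ := hstab
  intro U hU
  obtain ⟨ε, hε, hεU⟩ := Metric.mem_nhds_iff.1 hU
  filter_upwards [Metric.closedBall_mem_nhds x₀ hδ,
    (tendsto_const_mul_dist x₀ M).eventually_lt_const hε] with x hx hMx t ht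
  refine hεU ?_
  calc dist (φ t x) x₀ ≤ M * dist x x₀ * Real.exp (-c * t) := hdecay x hx t ht
    _ ≤ M * dist x x₀ := mul_le_of_le_one_right (by positivity)
        (Real.exp_le_one_iff.2 (by rw [neg_mul]; exact neg_nonpos.2 (by positivity)))
    _ < ε := hMx

theorem IsLocallyExpStable.tendsto_totalCost (hstab : IsLocallyExpStable φ x₀)
    (hη : η =O[𝓝 x₀] (dist · x₀)) : Tendsto (totalCost φ η) (𝓝 x₀) (𝓝 0) := by
  obtain ⟨K, hK, hηK⟩ := hη.exists_pos
  have hnear := hstab.isLyapunovStable _ hηK.bound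
  obtain ⟨δ, hδ, M, hM, c, hc, hdecay⟩ := hstab
  have hbound : ∀ᶠ x in 𝓝 x₀, totalCost φ η x ≤ ENNReal.ofReal (K * M / c * dist x x₀) := by
    filter_upwards [Metric.closedBall_mem_nhds x₀ hδ, hnear] with x hx hηx
    have hηexp : ∀ t ∈ Set.Ioi (0 : ℝ),
        η (φ t x) ≤ K * (M * dist x x₀) * Real.exp (-c * t) := fun t ht =>
      calc η (φ t x) ≤ ‖η (φ t x)‖ := Real.le_norm_self _
        _ ≤ K * dist (φ t x) x₀ := by simpa using hηx t (le_of_lt ht)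
        _ ≤ K * (M * dist x x₀ * Real.exp (-c * t)) := by gcongr; exact hdecay x hx t (le_of_lt ht)
        _ = K * (M * dist x x₀) * Real.exp (-c * t) := by ring
    calc totalCost φ η x
        ≤ ∫⁻ t in Set.Ioi (0 : ℝ), ENNReal.ofReal (K * (M * dist x x₀) * Real.exp (-c * t)) :=
          setLIntegral_mono' measurableSet_Ioi fun t ht => ENNReal.ofReal_le_ofReal (hηexp t ht)
      _ = ENNReal.ofReal (K * (M * dist x x₀) / c) :=
          lintegral_ofReal_mul_exp_neg_Ioi_zero (by positivity) hc
      _ = ENNReal.ofReal (K * M / c * dist x x₀) := by congr 1; ring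
  refine tendsto_of_tendsto_of_tendsto_of_le_of_le' tendsto_const_nhds ?_
    (Eventually.of_forall fun _ => zero_le) hbound
  simpa using ENNReal.tendsto_ofReal (tendsto_const_mul_dist x₀ (K * M / c))

theorem isBigO_sub_dist_of_locallyLipschitz {E : Type*} [SeminormedAddCommGroup E] {f : X → E}
    (hf : LocallyLipschitz f) (x₀ : X) : (fun x => f x - f x₀) =O[𝓝 x₀] (dist · x₀) := by
  obtain ⟨K, s, hs, hK⟩ := hf x₀
  refine .of_bound K ?_
  filter_upwards [hs] with x hx
  simpa [dist_eq_norm] using hK.dist_le_mul x hx x₀ (mem_of_mem_nhds hs)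

theorem approximants_tendsto_zubovU_general
    (hφc : ∀ x, ContinuousOn (fun s => φ s x) (Set.Ici 0))
    (hφadd : ∀ x, ∀ s ≥ 0, ∀ t ≥ 0, φ s (φ t x) = φ (t + s) x)
    (hstab : IsLocallyExpStable φ x₀)
    (hη : LocallyLipschitz η) (hηnn : ∀ x, 0 ≤ η x) (hη0 : η x₀ = 0)
    (hηinf : ∀ r > 0, ∃ m > 0, ∀ y, r ≤ dist y x₀ → m ≤ η y)
    {h : X → ℝ} (hh : ContinuousAt h x₀) (hhb : ∃ C, ∀ x, |h x| ≤ C)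
    {u : ℝ → ℕ → X → ℝ} {Ω : Set X}
    (huconv : ∀ t > 0, ∀ ε > 0, ∃ K₀ : ℕ, ∀ k ≥ K₀, ∀ x ∈ Ω,
      |weightedKoopman φ η t h x - u t k x| < ε) :
    ∀ ε > 0, ∃ T₀ > 0, ∀ t ≥ T₀, ∃ K₀ : ℕ, ∀ k ≥ K₀, ∀ x ∈ Ω,
      |u t k x - koopmanLimit φ η x₀ h x| < ε := by
  intro ε hε
  obtain ⟨C, hC⟩ := hhb
  have hηφ : ∀ x, ContinuousOn (fun s => η (φ s x)) (Set.Ici 0) := fun x =>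
    hη.continuous.comp_continuousOn (hφc x)
  have hηinf' : ∀ U ∈ 𝓝 x₀, ∃ m > 0, ∀ y ∉ U, m ≤ η y := fun U hU => by
    obtain ⟨r, hr, hrU⟩ := Metric.mem_nhds_iff.1 hU
    obtain ⟨m, hm, hηm⟩ := hηinf r hr
    exact ⟨m, hm, fun y hy => hηm y (not_lt.1 fun hlt => hy (hrU hlt))⟩
  have hV : Tendsto (totalCost φ η) (𝓝 x₀) (𝓝 0) :=
    hstab.tendsto_totalCost (by simpa [hη0] using isBigO_sub_dist_of_locallyLipschitz hη x₀)
  have hlim : TendstoUniformly (weightedKoopman φ η · h) (koopmanLimit φ η x₀ h) atTop :=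
    tendstoUniformly_weightedKoopman hηnn hφadd hηφ hstab.isLyapunovStable hηinf' hV hC hh
  obtain ⟨T₀, hT₀, hT⟩ := (atTop_basis' 1).eventually_iff.1
    (Metric.tendstoUniformly_iff.1 hlim (ε / 2) (half_pos hε))
  refine ⟨T₀, by positivity, fun t ht => ?_⟩
  obtain ⟨K₀, hK⟩ := huconv t (by linarith) (ε / 2) (half_pos hε)
  refine ⟨K₀, fun k hk x hx => ?_⟩
  rw [← Real.dist_eq, dist_comm]
  exact (dist_triangle _ _ _).trans_lt
    ((add_lt_add (hT ht x) (hK k hk x hx)).trans_eq (add_halves ε))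

end ExponentialStability

theorem zubovU_eq_koopmanLimit {n : ℕ}
    (φ : ℝ → EuclideanSpace ℝ (Fin n) → EuclideanSpace ℝ (Fin n))
    (η : EuclideanSpace ℝ (Fin n) → ℝ) (xeq : EuclideanSpace ℝ (Fin n))
    (h : EuclideanSpace ℝ (Fin n) → ℝ) : zubovU φ η xeq h = koopmanLimit φ η xeq h :=
  funext fun x => by simp only [zubovU, koopmanLimit, expNeg, ite_mul, zero_mul]; rfl

/-- if bounded continuous locally Lipschitz approximants `u_k^t` converge to
`T_t h` uniformly on bounded sets for each `t > 0`, then `u_k^t` converges uniformly on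
bounded sets to `U_h` as `t, k → ∞`. -/
theorem approximants_tendsto_zubovU {n : ℕ}
    (f : EuclideanSpace ℝ (Fin n) → EuclideanSpace ℝ (Fin n))
    (φ : ℝ → EuclideanSpace ℝ (Fin n) → EuclideanSpace ℝ (Fin n))
    (xeq : EuclideanSpace ℝ (Fin n))
    (hf : LocallyLipschitz f)
    (hφ0 : ∀ x, φ 0 x = x)
    (hφd : ∀ x, ∀ t ≥ (0:ℝ), HasDerivWithinAt (fun s => φ s x) (f (φ t x)) (Set.Ici 0) t)
    (hφadd : ∀ x, ∀ s ≥ (0:ℝ), ∀ t ≥ (0:ℝ), φ s (φ t x) = φ (t + s) x)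
    (hfeq : f xeq = 0)
    (hstab : ∃ δ > (0:ℝ), ∃ M > (0:ℝ), ∃ c > (0:ℝ), ∀ x : EuclideanSpace ℝ (Fin n),
      ‖x - xeq‖ ≤ δ → ∀ t ≥ (0:ℝ), ‖φ t x - xeq‖ ≤ M * ‖x - xeq‖ * Real.exp (-c * t))
    (η : EuclideanSpace ℝ (Fin n) → ℝ)
    (hη : LocallyLipschitz η) (hηnn : ∀ x, 0 ≤ η x)
    (hη0 : η xeq = 0) (hηpos : ∀ x, x ≠ xeq → 0 < η x)
    (hηinf : ∀ r > (0:ℝ), ∃ m > (0:ℝ), ∀ y, r ≤ ‖y - xeq‖ → m ≤ η y)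
    (h : EuclideanSpace ℝ (Fin n) → ℝ)
    (hh : Continuous h) (hhb : ∃ C, ∀ x, |h x| ≤ C) (hhl : LocallyLipschitz h)
    (u : ℝ → ℕ → EuclideanSpace ℝ (Fin n) → ℝ)
    (hu : ∀ t > (0:ℝ), ∀ k : ℕ, Continuous (u t k) ∧ (∃ C, ∀ x, |u t k x| ≤ C) ∧
      LocallyLipschitz (u t k))
    (huconv : ∀ t > (0:ℝ), ∀ Ω : Set (EuclideanSpace ℝ (Fin n)), IsBounded Ω →
      ∀ ε > (0:ℝ), ∃ K₀ : ℕ, ∀ k ≥ K₀, ∀ x ∈ Ω,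
        |zubovKoopman φ η t h x - u t k x| < ε) :
    ∀ Ω : Set (EuclideanSpace ℝ (Fin n)), IsBounded Ω →
      ∀ ε > (0:ℝ), ∃ T₀ > (0:ℝ), ∀ t ≥ T₀, ∃ K₀ : ℕ, ∀ k ≥ K₀, ∀ x ∈ Ω,
        |u t k x - zubovU φ η xeq h x| < ε := by
  simp only [← dist_eq_norm] at hstab hηinf
  exact fun Ω hΩ => zubovU_eq_koopmanLimit φ η xeq h ▸ approximants_tendsto_zubovU_general
    (fun x t ht => (hφd x t ht).continuousWithinAt) hφadd hstab hη hηnn hη0 hηinf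
    hh.continuousAt hhb fun t ht => huconv t ht Ω hΩ
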